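/- Let g be a finite-dimensional semisimple Lie algebra over a field K of characteristic zero and let V be a finite-dimensional Lie module over g. If φ : g → V is a linear map satisfying φ(⁅v₁, v₂⁆) = ⁅v₁, φ(v₂)⁆ − ⁅v₂, φ(v₁)⁆ for all v₁, v₂ ∈ g, then there exists x ∈ V such that φ(v) = ⁅v, x⁆ for every v ∈ g. -/

import Mathlib

/-!
By induction on `dim V` and the long exact sequence of `0 → W → V → V/W → 0` one may assume that
`V` is irreducible. If the trace form of `V` vanishes, then by Cartan's criterion the perfect Lie
algebra `L` acts nilpotently, hence trivially, and a cocycle with trivial coefficients kills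
`[L, L] = L`. Otherwise the trace form is nondegenerate on an ideal `J ≠ 0` complementary to its
kernel. Contracting a cochain `φ` with dual bases `bᵢ`, `dᵢ` of `J` gives `h φ = ∑ᵢ ⁅bᵢ, φ dᵢ⁆`;
this is a chain homotopy between `0` and the Casimir operator, which is invertible by Schur's lemma
because its trace is `dim J ≠ 0`.
-/

open LieModule.Cohomology

section Cocycles

variable (R L M : Type*) [CommRing R] [LieRing L] [LieAlgebra R L]
  [AddCommGroup M] [Module R M] [LieRingModule L M] [LieModule R L M]

/-- The coboundary operator of Lie algebra cohomology from `0`-cochains, i.e. elements of `M`,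
to `1`-cochains; it precedes Mathlib's `LieModule.Cohomology.d₁₂`. -/
def d₀₁ : M →ₗ[R] oneCochain R L M :=
  (LieModule.toEnd R L M : L →ₗ[R] Module.End R M).flip

/-- The `1`-cocycles of `L` with coefficients in `M`. -/
def oneCocycle : Submodule R (oneCochain R L M) :=
  LinearMap.ker (d₁₂ R L M)

/-- The `1`-coboundaries of `L` with coefficients in `M`, so that the first cohomology group
vanishes if and only if `oneCocycle R L M ≤ oneCoboundary R L M`. -/
def oneCoboundary : Submodule R (oneCochain R L M) :=
  LinearMap.range (d₀₁ R L M)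

variable {R L M}

@[simp]
lemma d₀₁_apply_apply (m : M) (x : L) : d₀₁ R L M m x = ⁅x, m⁆ :=
  rfl

lemma mem_oneCocycle_iff {φ : oneCochain R L M} :
    φ ∈ oneCocycle R L M ↔ ∀ x y, φ ⁅x, y⁆ = ⁅x, φ y⁆ - ⁅y, φ x⁆ := by
  have d_eq_zero_iff : d₁₂ R L M φ = 0 ↔ ∀ x y, d₁₂ R L M φ x y = 0 :=
    Subtype.ext_iff.trans LinearMap.ext_iff₂
  rw [oneCocycle, LinearMap.mem_ker, d_eq_zero_iff]
  exact forall₂_congr fun x y ↦ sub_eq_zero.trans eq_comm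

lemma mem_oneCoboundary_iff {φ : oneCochain R L M} :
    φ ∈ oneCoboundary R L M ↔ ∃ m : M, ∀ x, φ x = ⁅x, m⁆ := by
  simp only [oneCoboundary, LinearMap.mem_range, LinearMap.ext_iff, d₀₁_apply_apply, eq_comm]

lemma oneCoboundary_le_oneCocycle : oneCoboundary R L M ≤ oneCocycle R L M := by
  rintro _ ⟨m, rfl⟩
  exact mem_oneCocycle_iff.mpr fun x y ↦ lie_lie x y m

lemma comp_mem_oneCocycle {N : Type*} [AddCommGroup N] [Module R N] [LieRingModule L N]
    [LieModule R L N] (g : M →ₗ⁅R,L⁆ N) {φ : oneCochain R L M} (hφ : φ ∈ oneCocycle R L M) :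
    (g : M →ₗ[R] N) ∘ₗ φ ∈ oneCocycle R L N := by
  rw [mem_oneCocycle_iff] at hφ ⊢
  simp [hφ]

lemma codRestrict_mem_oneCocycle {N : LieSubmodule R L M} {φ : oneCochain R L M}
    (hφ : φ ∈ oneCocycle R L M) (hN : ∀ x, φ x ∈ N) :
    φ.codRestrict N.toSubmodule hN ∈ oneCocycle R L N :=
  mem_oneCocycle_iff.mpr fun x y ↦ Subtype.ext (mem_oneCocycle_iff.mp hφ x y)

theorem oneCocycle_le_oneCoboundary_of_quotient (N : LieSubmodule R L M)
    (hN : oneCocycle R L N ≤ oneCoboundary R L N)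
    (hQ : oneCocycle R L (M ⧸ N) ≤ oneCoboundary R L (M ⧸ N)) :
    oneCocycle R L M ≤ oneCoboundary R L M := by
  intro φ hφ
  obtain ⟨q, hq⟩ :=
    mem_oneCoboundary_iff.mp (hQ (comp_mem_oneCocycle (LieSubmodule.Quotient.mk' N) hφ))
  obtain ⟨m, rfl⟩ := LieSubmodule.Quotient.surjective_mk' N q
  have sub_mem_N (x : L) : (φ - d₀₁ R L M m) x ∈ N := by
    rw [← LieSubmodule.Quotient.mk_eq_zero, LinearMap.sub_apply, d₀₁_apply_apply]
    exact sub_eq_zero.mpr (hq x)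
  have sub_mem_cocycle : φ - d₀₁ R L M m ∈ oneCocycle R L M :=
    sub_mem hφ (oneCoboundary_le_oneCocycle ⟨m, rfl⟩)
  obtain ⟨n, hn⟩ :=
    mem_oneCoboundary_iff.mp (hN (codRestrict_mem_oneCocycle sub_mem_cocycle sub_mem_N))
  refine mem_oneCoboundary_iff.mpr ⟨m + n, fun x ↦ ?_⟩
  have hnx : φ x - ⁅x, m⁆ = ⁅x, (n : M)⁆ := congrArg Subtype.val (hn x)
  rw [lie_add, ← hnx, add_sub_cancel]

lemma oneCocycle_eq_bot_of_isTrivial [LieModule.IsTrivial L M]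
    (hL : LieAlgebra.derivedSeries R L 1 = ⊤) : oneCocycle R L M = ⊥ := by
  refine (Submodule.eq_bot_iff _).mpr fun φ hφ ↦ LinearMap.ker_eq_top.mp ?_
  rw [eq_top_iff, ← LieSubmodule.top_toSubmodule (R := R) (L := L), ← hL,
    LieAlgebra.derivedSeries_def, LieAlgebra.derivedSeriesOfIdeal_succ,
    LieAlgebra.derivedSeriesOfIdeal_zero, LieSubmodule.lieIdeal_oper_eq_linear_span',
    Submodule.span_le]
  rintro _ ⟨x, -, y, -, rfl⟩
  simp [mem_oneCocycle_iff.mp hφ, LieModule.IsTrivial.trivial]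

end Cocycles

section Perfect

theorem derivedSeries_one_eq_top_of_isSemisimple (R L : Type*) [CommRing R] [LieRing L]
    [LieAlgebra R L] [LieAlgebra.IsSemisimple R L] : LieAlgebra.derivedSeries R L 1 = ⊤ := by
  rw [eq_top_iff, ← LieAlgebra.IsSemisimple.sSup_atoms_eq_top]
  refine sSup_le fun I hI ↦ ?_
  calc I = ⁅I, I⁆ := (lie_eq_self_of_isAtom_of_nonabelian I hI
          (LieAlgebra.IsSemisimple.non_abelian_of_isAtom I hI)).symm
    _ ≤ ⁅(⊤ : LieIdeal R L), (⊤ : LieIdeal R L)⁆ := LieSubmodule.mono_lie le_top le_top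

lemma isTrivial_of_isIrreducible_of_isNilpotent (R L M : Type*) [CommRing R] [LieRing L]
    [LieAlgebra R L] [AddCommGroup M] [Module R M] [LieRingModule L M] [LieModule R L M]
    [LieModule.IsIrreducible R L M] [LieModule.IsNilpotent L M] : LieModule.IsTrivial L M := by
  have := LieModule.nontrivial_of_isIrreducible R L M
  have := LieModule.nontrivial_max_triv_of_isNilpotent R L M
  rw [LieModule.isTrivial_iff_max_triv_eq_top R]
  exact LieSubmodule.eq_top_of_isIrreducible R L M _

lemma isNilpotent_of_traceForm_eq_zero {R L M : Type*} [CommRing R] [IsDomain R] [CharZero R]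
    [LieRing L] [LieAlgebra R L] [AddCommGroup M] [Module R M] [Module.Free R M]
    [IsNoetherian R M] [LieRingModule L M] [LieModule R L M]
    (hL : LieAlgebra.derivedSeries R L 1 = ⊤) (h : LieModule.traceForm R L M = 0) :
    LieModule.IsNilpotent L M := by
  have hD := LieModule.isNilpotent_derivedSeries_of_traceForm_eq_zero h
  rw [LieModule.isNilpotent_iff_forall' (R := R)] at hD ⊢
  exact fun x ↦ hD ⟨x, hL ▸ LieSubmodule.mem_top x⟩

end Perfect

section DualBasis

variable {K J W ι : Type*} [Field K] [AddCommGroup J] [Module K J] [AddCommGroup W] [Module K W]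
  [Fintype ι] [DecidableEq ι] {B : LinearMap.BilinForm K J} (hB : B.Nondegenerate)
  (b : Module.Basis ι K J)

lemma sum_apply_smul_dualBasis (x : J) : ∑ j, B x (b j) • B.dualBasis hB b j = x := by
  simpa only [LinearMap.BilinForm.dualBasis_repr_apply] using (B.dualBasis hB b).sum_repr x

lemma sum_dualBasis_apply_smul (x : J) : ∑ j, B (B.dualBasis hB b j) x • b j = x := by
  have coord_eq (j : ι) : B (B.dualBasis hB b j) = b.coord j :=
    b.ext fun i ↦ by simp [LinearMap.BilinForm.apply_dualBasis_left, Finsupp.single_apply]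
  simpa only [coord_eq, Module.Basis.coord_apply] using b.sum_repr x

theorem sum_lie_dualBasis_eq_zero {L : Type*} [LieRing L] [LieRingModule L J]
    (hinv : B.lieInvariant L) (f : J →ₗ[K] J →ₗ[K] W) (v : L) :
    ∑ i, (f ⁅v, b i⁆ (B.dualBasis hB b i) + f (b i) ⁅v, B.dualBasis hB b i⁆) = 0 := by
  set d := B.dualBasis hB b
  have expand_left (i : ι) : f ⁅v, b i⁆ (d i) = ∑ j, B (d j) ⁅v, b i⁆ • f (b j) (d i) := by
    conv_lhs => rw [← sum_dualBasis_apply_smul hB b ⁅v, b i⁆]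
    simp only [map_sum, map_smul, LinearMap.sum_apply, LinearMap.smul_apply, d]
  have expand_right (i : ι) : f (b i) ⁅v, d i⁆ = -∑ j, B (d i) ⁅v, b j⁆ • f (b i) (d j) := by
    conv_lhs => rw [← sum_apply_smul_dualBasis hB b ⁅v, d i⁆]
    simp only [map_sum, map_smul, d, hinv v, neg_smul, map_neg, Finset.sum_neg_distrib]
  simp only [expand_left, expand_right, Finset.sum_add_distrib, Finset.sum_neg_distrib]
  rw [Finset.sum_comm, add_neg_cancel]

end DualBasis

section Casimir

variable {K L V ι : Type*} [Field K] [LieRing L] [LieAlgebra K L]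
  [AddCommGroup V] [Module K V] [LieRingModule L V] [LieModule K L V]
  [Fintype ι] [DecidableEq ι] {J : LieIdeal K L} {B : LinearMap.BilinForm K J}
  (hB : B.Nondegenerate) (b : Module.Basis ι K J)

/-- The contraction of `1`-cochains with the Casimir tensor `∑ᵢ bᵢ ⊗ dᵢ` of a nondegenerate
bilinear form on an ideal, where `d` is the dual basis of `b`. -/
noncomputable def casimirHomotopy : oneCochain K L V →ₗ[K] V :=
  ∑ i, LieModule.toEnd K L V (b i) ∘ₗ LinearMap.applyₗ (B.dualBasis hB b i : L)

lemma casimirHomotopy_apply (φ : oneCochain K L V) :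
    casimirHomotopy hB b φ = ∑ i, ⁅(b i : L), φ (B.dualBasis hB b i)⁆ := by
  simp [casimirHomotopy]

theorem lie_casimirHomotopy (hinv : B.lieInvariant L) {φ : oneCochain K L V}
    (hφ : φ ∈ oneCocycle K L V) (v : L) :
    ⁅v, casimirHomotopy hB b φ⁆ = casimirHomotopy hB b (d₀₁ K L V (φ v)) := by
  let incl : J →ₗ[K] L := J.toSubmodule.subtype
  have tensor_invariant := sum_lie_dualBasis_eq_zero hB b hinv
    ((LieModule.toEnd K L V : L →ₗ[K] Module.End K V).compl₁₂ incl (φ ∘ₗ incl)) v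
  rw [← sub_eq_zero, ← tensor_invariant, casimirHomotopy_apply, casimirHomotopy_apply, lie_sum,
    ← Finset.sum_sub_distrib]
  refine Finset.sum_congr rfl fun i _ ↦ ?_
  let x : L := (b i : J)
  let y : L := (B.dualBasis hB b i : J)
  change ⁅v, ⁅x, φ y⁆⁆ - ⁅x, ⁅y, φ v⁆⁆ = ⁅⁅v, x⁆, φ y⁆ + ⁅x, φ ⁅v, y⁆⁆
  rw [mem_oneCocycle_iff.mp hφ, leibniz_lie, lie_sub]
  abel

/-- The Casimir operator on `V` of a nondegenerate invariant bilinear form on an ideal of `L`. -/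
noncomputable def casimir (hinv : B.lieInvariant L) : V →ₗ⁅K,L⁆ V where
  toLinearMap := casimirHomotopy hB b ∘ₗ d₀₁ K L V
  map_lie' {v m} := (lie_casimirHomotopy hB b hinv (oneCoboundary_le_oneCocycle ⟨m, rfl⟩) v).symm

theorem oneCocycle_le_oneCoboundary_of_bijective_casimir (hinv : B.lieInvariant L)
    (hc : Function.Bijective (casimir (V := V) hB b hinv)) :
    oneCocycle K L V ≤ oneCoboundary K L V := by
  intro φ hφ
  obtain ⟨m, hm⟩ := hc.surjective (casimirHomotopy hB b φ)
  refine mem_oneCoboundary_iff.mpr ⟨m, fun v ↦ hc.injective ?_⟩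
  calc casimir hB b hinv (φ v) = ⁅v, casimirHomotopy hB b φ⁆ :=
        (lie_casimirHomotopy hB b hinv hφ v).symm
    _ = ⁅v, casimir hB b hinv m⁆ := by rw [hm]
    _ = casimir hB b hinv ⁅v, m⁆ := (LieModuleHom.map_lie _ v m).symm

theorem trace_casimir_traceForm (hinv : B.lieInvariant L)
    (hBV : ∀ x y : J, B x y = LieModule.traceForm K L V x y) :
    LinearMap.trace K V (casimir (V := V) hB b hinv : V →ₗ[K] V) = Fintype.card ι := by
  let d := B.dualBasis hB b
  have casimir_eq : (casimir (V := V) hB b hinv : V →ₗ[K] V) =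
      ∑ i, LieModule.toEnd K L V (b i) ∘ₗ LieModule.toEnd K L V (d i) := by
    ext m
    rw [LinearMap.sum_apply]
    exact casimirHomotopy_apply hB b (d₀₁ K L V m)
  have trace_eq_one (i : ι) : LinearMap.trace K V
      (LieModule.toEnd K L V (b i) ∘ₗ LieModule.toEnd K L V (d i)) = 1 := by
    rw [← LieModule.traceForm_apply_apply, LieModule.traceForm_comm, ← hBV,
      LinearMap.BilinForm.apply_dualBasis_left, if_pos rfl]
  simp [casimir_eq, trace_eq_one]

end Casimir

section Irreducible

theorem bijective_of_isIrreducible_of_ne_zero {K L V : Type*} [Field K] [LieRing L]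
    [AddCommGroup V] [Module K V] [FiniteDimensional K V] [LieRingModule L V]
    [LieModule.IsIrreducible K L V] {f : V →ₗ⁅K,L⁆ V} (hf : f ≠ 0) : Function.Bijective f := by
  have ker_ne_top : f.ker ≠ ⊤ := fun h ↦
    hf (LieModuleHom.ext fun m ↦ LieModuleHom.mem_ker.mp (h ▸ LieSubmodule.mem_top m))
  have injective : Function.Injective f :=
    f.ker_eq_bot.mp ((eq_bot_or_eq_top f.ker).resolve_right ker_ne_top)
  exact ⟨injective, LinearMap.surjective_of_injective (f := (f : V →ₗ[K] V)) injective⟩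

variable {K L V : Type*} [Field K] [LieRing L] [LieAlgebra K L]
  [AddCommGroup V] [Module K V] [LieRingModule L V] [LieModule K L V]

lemma finite_of_disjoint_ker_traceForm [FiniteDimensional K V] {J : Submodule K L}
    (hJ : Disjoint J (LinearMap.ker (LieModule.traceForm K L V))) : Module.Finite K J := by
  refine Module.Finite.of_injective
    ((LieModule.toEnd K L V : L →ₗ[K] Module.End K V) ∘ₗ J.subtype) ?_
  rw [injective_iff_map_eq_zero]
  intro x hx
  refine Subtype.ext (Submodule.disjoint_def.mp hJ x x.2 (LinearMap.ext fun y ↦ ?_))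
  have toEnd_eq_zero : LieModule.toEnd K L V x = 0 := hx
  rw [LieModule.traceForm_apply_apply, toEnd_eq_zero, LinearMap.zero_comp, map_zero,
    LinearMap.zero_apply]

theorem exists_isCompl_ker_traceForm (K L V : Type*) [Field K] [LieRing L] [LieAlgebra K L]
    [AddCommGroup V] [Module K V] [LieRingModule L V] [LieModule K L V]
    [LieAlgebra.IsSemisimple K L] :
    ∃ J : LieIdeal K L, IsCompl J.toSubmodule (LinearMap.ker (LieModule.traceForm K L V)) := by
  let I : LieIdeal K L := LieAlgebra.InvariantForm.orthogonal (LieModule.traceForm K L V)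
    (LieModule.traceForm_lieInvariant K L V) ⊤
  have hI : I.toSubmodule = LinearMap.ker (LieModule.traceForm K L V) :=
    LinearMap.BilinForm.orthogonal_top_eq_ker (LieModule.traceForm_isSymm K L V).isRefl
  obtain ⟨J, hJ⟩ := exists_isCompl I
  exact ⟨J, hI ▸ LieSubmodule.isCompl_toSubmodule.mpr hJ.symm⟩

theorem oneCocycle_le_oneCoboundary_of_traceForm_ne_zero [CharZero K] [FiniteDimensional K V]
    [LieAlgebra.IsSemisimple K L] [LieModule.IsIrreducible K L V]
    (h : LieModule.traceForm K L V ≠ 0) : oneCocycle K L V ≤ oneCoboundary K L V := by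
  obtain ⟨J, hJ⟩ := exists_isCompl_ker_traceForm K L V
  have : Module.Finite K J := finite_of_disjoint_ker_traceForm hJ.disjoint
  let B : LinearMap.BilinForm K J := (LieModule.traceForm K L V).restrict J.toSubmodule
  have hB : B.Nondegenerate :=
    (LieModule.traceForm_isSymm K L V).nondegenerate_restrict_of_isCompl_ker hJ
  have hinv : B.lieInvariant L :=
    fun v x y ↦ LieModule.traceForm_lieInvariant K L V v x y
  have finrank_ne_zero : Module.finrank K J ≠ 0 := by
    intro h0
    have : J.toSubmodule = ⊥ := Submodule.finrank_eq_zero.mp h0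
    exact h (LinearMap.ker_eq_top.mp (eq_top_of_bot_isCompl (this ▸ hJ)))
  have casimir_ne_zero : casimir (V := V) hB (Module.finBasis K J) hinv ≠ 0 := by
    intro hc
    have trace_eq := trace_casimir_traceForm (V := V) hB (Module.finBasis K J) hinv fun _ _ ↦ rfl
    rw [hc, Fintype.card_fin] at trace_eq
    exact finrank_ne_zero (Nat.cast_eq_zero.mp (trace_eq.symm.trans (map_zero _)))
  exact oneCocycle_le_oneCoboundary_of_bijective_casimir hB _ hinv
    (bijective_of_isIrreducible_of_ne_zero casimir_ne_zero)

theorem oneCocycle_le_oneCoboundary_of_isIrreducible [CharZero K] [FiniteDimensional K V]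
    [LieAlgebra.IsSemisimple K L] [LieModule.IsIrreducible K L V] :
    oneCocycle K L V ≤ oneCoboundary K L V := by
  by_cases h : LieModule.traceForm K L V = 0
  · have perfect := derivedSeries_one_eq_top_of_isSemisimple K L
    have := isNilpotent_of_traceForm_eq_zero perfect h
    have := isTrivial_of_isIrreducible_of_isNilpotent K L V
    simp [oneCocycle_eq_bot_of_isTrivial perfect]
  · exact oneCocycle_le_oneCoboundary_of_traceForm_ne_zero h

end Irreducible

theorem oneCocycle_le_oneCoboundary (K L V : Type*) [Field K] [CharZero K]
    [LieRing L] [LieAlgebra K L] [LieAlgebra.IsSemisimple K L]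
    [AddCommGroup V] [Module K V] [FiniteDimensional K V]
    [LieRingModule L V] [LieModule K L V] :
    oneCocycle K L V ≤ oneCoboundary K L V := by
  induction hn : Module.finrank K V using Nat.strong_induction_on generalizing V with
  | _ n ih =>
    subst hn
    rcases subsingleton_or_nontrivial V with _ | _
    · exact fun φ _ ↦ mem_oneCoboundary_iff.mpr ⟨0, fun v ↦ Subsingleton.elim _ _⟩
    by_cases hirr : LieModule.IsIrreducible K L V
    · exact oneCocycle_le_oneCoboundary_of_isIrreducible
    obtain ⟨W, hW_bot, hW_top⟩ : ∃ W : LieSubmodule K L V, W ≠ ⊥ ∧ W ≠ ⊤ := by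
      contrapose! hirr
      exact LieModule.IsIrreducible.mk hirr
    have finrank_sub_lt : Module.finrank K W < Module.finrank K V :=
      Submodule.finrank_lt (by simpa using hW_top)
    have finrank_sub_ne_zero : Module.finrank K W ≠ 0 := fun h0 ↦
      hW_bot ((LieSubmodule.toSubmodule_eq_bot W).mp (Submodule.finrank_eq_zero.mp h0))
    have finrank_add : Module.finrank K (V ⧸ W) + Module.finrank K W = Module.finrank K V :=
      W.toSubmodule.finrank_quotient_add_finrank
    have finrank_quotient_lt : Module.finrank K (V ⧸ W) < Module.finrank K V := by omega
    exact oneCocycle_le_oneCoboundary_of_quotient W (ih _ finrank_sub_lt W rfl)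
      (ih _ finrank_quotient_lt (V ⧸ W) rfl)

theorem whitehead_first_lemma_general
    {K : Type*} [Field K] [CharZero K]
    {L : Type*} [LieRing L] [LieAlgebra K L] [LieAlgebra.IsSemisimple K L]
    {V : Type*} [AddCommGroup V] [Module K V] [FiniteDimensional K V]
    [LieRingModule L V] [LieModule K L V]
    (φ : L →ₗ[K] V)
    (hφ : ∀ v₁ v₂ : L, φ ⁅v₁, v₂⁆ = ⁅v₁, φ v₂⁆ - ⁅v₂, φ v₁⁆) :
    ∃ x : V, ∀ v : L, φ v = ⁅v, x⁆ :=
  mem_oneCoboundary_iff.mp (oneCocycle_le_oneCoboundary K L V (mem_oneCocycle_iff.mpr hφ))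

/-- Whitehead-type theorem: every 1-cocycle of a finite-dimensional semisimple Lie
algebra (over a field of characteristic zero) with values in a finite-dimensional
Lie module is a coboundary. -/
theorem whitehead_first_lemma
    {K : Type*} [Field K] [CharZero K]
    {L : Type*} [LieRing L] [LieAlgebra K L] [FiniteDimensional K L]
    [LieAlgebra.IsSemisimple K L]
    {V : Type*} [AddCommGroup V] [Module K V] [FiniteDimensional K V]
    [LieRingModule L V] [LieModule K L V]
    (φ : L →ₗ[K] V)
    (hφ : ∀ v₁ v₂ : L, φ ⁅v₁, v₂⁆ = ⁅v₁, φ v₂⁆ - ⁅v₂, φ v₁⁆) :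
    ∃ x : V, ∀ v : L, φ v = ⁅v, x⁆ :=
  whitehead_first_lemma_general φ hφ
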